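/- For every word m ∈ X*, the principal order ideal {m' ∈ X* : m' ≤_𝔑 m} is a finite set. -/

import Mathlib

/-- A standard term order on the free monoid `X*` on the countable alphabet
`X = {x₁, x₂, …}`, whose words we represent as lists of positive integers
(the word `x_{i₁} ⋯ x_{i_d}` is the list `[i₁, …, i_d]`).  It is a strict
total order such that the empty word `1` is smallest, which is compatible
with two-sided multiplication (concatenation), and with `x₁ < x₂ < ⋯`. -/
structure StdTermOrder where
  lt : List ℕ+ → List ℕ+ → Prop
  irrefl : ∀ a, ¬ lt a a
  trans : ∀ a b c, lt a b → lt b c → lt a c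
  total : ∀ a b, a ≠ b → lt a b ∨ lt b a
  one_lt : ∀ t, t ≠ [] → lt [] t
  mul_lt : ∀ a b s t, lt s t → lt (a ++ s ++ b) (a ++ t ++ b)
  std : ∀ i j : ℕ+, i < j → lt [i] [j]

/-- The partial order `𝔑`, the intersection of all standard term orders:
`m ≤_𝔑 m'` iff `m ≤ m'` holds for every standard term order on `X*`. -/
def Nle (m m' : List ℕ+) : Prop := ∀ T : StdTermOrder, m = m' ∨ T.lt m m'

/-- The strict version of `𝔑`. -/
def Nlt (m m' : List ℕ+) : Prop := Nle m m' ∧ m ≠ m'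

/-- `m'` covers `m` in the partial order `𝔑`. -/
def NCovers (m m' : List ℕ+) : Prop :=
  Nlt m m' ∧ ∀ k, Nlt m k → ¬ Nlt k m'

/-! Give the letter `x_i` the weight `i`. Comparing words first by total weight and then
lexicographically is a standard term order, so `m' ≤_𝔑 m` forces the weight of `m'` to be at most
that of `m`. All letters have positive weight and only finitely many have a given weight, so only
finitely many words have weight at most a given bound. -/

section Weight

variable {α M : Type*}

/-- The weight of a word: the sum of the weights `w a` of its letters. The term orders used here
compare weights first. -/
def weight [AddMonoid M] (w : α → M) (l : List α) : M := (l.map w).sum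

@[simp]
theorem weight_nil [AddMonoid M] (w : α → M) : weight w [] = 0 := rfl

@[simp]
theorem weight_cons [AddMonoid M] (w : α → M) (a : α) (l : List α) :
    weight w (a :: l) = w a + weight w l := by
  simp only [weight, List.map_cons, List.sum_cons]

@[simp]
theorem weight_append [AddMonoid M] (w : α → M) (s t : List α) :
    weight w (s ++ t) = weight w s + weight w t := by
  simp only [weight, List.map_append, List.sum_append]

theorem weight_pos [AddCommMonoid M] [PartialOrder M] [IsOrderedAddMonoid M] {w : α → M}
    (hw : ∀ a, 0 < w a) {l : List α} (hl : l ≠ []) : 0 < weight w l :=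
  List.sum_pos _ (List.forall_mem_map.2 fun a _ ↦ hw a) (by simpa using hl)

theorem eq_of_prefix_of_weight_eq [AddCommMonoid M] [PartialOrder M] [IsOrderedCancelAddMonoid M]
    {w : α → M} (hw : ∀ a, 0 < w a) {s t : List α} (hst : s <+: t)
    (hwt : weight w s = weight w t) : s = t := by
  obtain ⟨u, rfl⟩ := hst
  have hu : weight w u = 0 := by simpa using hwt
  have hnil : u = [] := by_contra fun h ↦ (weight_pos hw h).ne' hu
  rw [hnil, List.append_nil]

theorem finite_setOf_weight_le {w : α → ℕ} (hw : ∀ a, 0 < w a)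
    (hfin : ∀ n, {a | w a ≤ n}.Finite) (n : ℕ) : {l | weight w l ≤ n}.Finite := by
  induction n with
  | zero =>
    refine (Set.finite_singleton []).subset fun l hl ↦ ?_
    exact by_contra fun h ↦ (weight_pos hw h).not_ge hl
  | succ n ih =>
    refine ((Set.finite_singleton []).union
      (Set.Finite.image2 List.cons (hfin (n + 1)) ih)).subset ?_
    rintro (_ | ⟨a, l⟩) hl
    · exact Or.inl rfl
    · have hal : w a + weight w l ≤ n + 1 := by simpa using hl
      have ha : 0 < w a := hw a
      exact Or.inr ⟨a, show w a ≤ n + 1 by lia, l, show weight w l ≤ n by lia, rfl⟩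

end Weight

theorem append_lt_append_of_not_prefix {α : Type*} [LT α] {s t : List α} (hst : s < t)
    (hpre : ¬ s <+: t) (u v : List α) : s ++ u < t ++ v := by
  induction s generalizing t with
  | nil => exact absurd t.nil_prefix hpre
  | cons a s ih =>
    cases t with
    | nil => exact absurd hst (List.not_lt_nil _)
    | cons b t =>
      rw [List.cons_append, List.cons_append, List.cons_lt_cons_iff]
      rcases List.cons_lt_cons_iff.1 hst with hab | ⟨rfl, hst'⟩
      · exact Or.inl hab
      · exact Or.inr ⟨rfl, ih hst' fun h ↦ hpre (List.cons_prefix_cons.2 ⟨rfl, h⟩)⟩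

section WeightLex

variable {M : Type*} [AddCommMonoid M] [LinearOrder M] [IsOrderedCancelAddMonoid M] {w : ℕ+ → M}

/-- The weighted lexicographic order: words are compared by weight, and words of equal weight
lexicographically from the left. -/
def weightLex (hpos : ∀ i, 0 < w i) (hmono : Monotone w) : StdTermOrder where
  lt s t := toLex (weight w s, s) < toLex (weight w t, t)
  irrefl _ := lt_irrefl _
  trans _ _ _ := lt_trans
  total _ _ hst := lt_or_gt_of_ne fun h ↦ hst (congrArg Prod.snd (toLex.injective h))
  one_lt _ ht := Prod.Lex.toLex_lt_toLex.2 (Or.inl (weight_pos hpos ht))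
  mul_lt a b s t hst := by
    simp only [Prod.Lex.toLex_lt_toLex, weight_append, add_lt_add_iff_left, add_lt_add_iff_right,
      add_left_inj, add_right_inj, List.append_assoc] at hst ⊢
    refine hst.imp_right fun ⟨hwt, hlex⟩ ↦ ⟨hwt, List.append_left_lt ?_⟩
    -- Positivity of the weights is what makes the lexicographic tie-break right compatible.
    have hpre : ¬ s <+: t := fun h ↦ hlex.ne (eq_of_prefix_of_weight_eq hpos h hwt)
    exact append_lt_append_of_not_prefix hlex hpre b b
  std i j hij := by
    have hwt : weight w [i] ≤ weight w [j] := by simpa using hmono hij.le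
    exact Prod.Lex.toLex_lt_toLex'.2 ⟨hwt, fun _ ↦ List.cons_lt_cons_iff.2 (Or.inl hij)⟩

theorem weight_le_of_weightLex_lt (hpos : ∀ i, 0 < w i) (hmono : Monotone w) {s t : List ℕ+}
    (hst : (weightLex hpos hmono).lt s t) : weight w s ≤ weight w t :=
  (Prod.Lex.toLex_lt_toLex'.1 hst).1

theorem Nle.weight_le {s t : List ℕ+} (hst : Nle s t) (hpos : ∀ i, 0 < w i) (hmono : Monotone w) :
    weight w s ≤ weight w t := by
  rcases hst (weightLex hpos hmono) with rfl | hlt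
  · exact le_rfl
  · exact weight_le_of_weightLex_lt hpos hmono hlt

end WeightLex

/-- Every principal order ideal of `𝔑` is finite. -/
theorem stmt1 (m : List ℕ+) : {m' : List ℕ+ | Nle m' m}.Finite := by
  have hfin : {m' | weight PNat.val m' ≤ weight PNat.val m}.Finite :=
    finite_setOf_weight_le PNat.pos
      (fun n ↦ (Set.finite_Iic n).preimage PNat.coe_injective.injOn) _
  exact hfin.subset fun _ hle ↦ Nle.weight_le hle PNat.pos fun _ _ hij ↦ hij
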